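/- Suppose two correct processes each commit wave leaders using the direct commit rule with quorum ⌊n/2⌋ + 1: if process p commits leader v of wave w at round(w,4) and process q builds a valid vertex in any round ≥ round(w+1,1), then q's vertex has a strong path to v; hence any leader of a later wave committed by q has a strong path to v. -/

import Mathlib

open Finset Relation

/-- Strong-path reachability: a chain of strong edges. -/
def strongPath {V : Type*} [DecidableEq V] (strong : V → Finset V) : V → V → Prop :=
  ReflTransGen fun a b => b ∈ strong a

/-- round(w, i) = 4(w − 1) + i -/
def roundOf (w i : ℕ) : ℕ := 4 * (w - 1) + i

/-! The strong edges of a valid vertex in the round after the quorum `U` also form a quorum, and two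
quorums of one round share a vertex. A vertex of a higher round first descends along strong edges to
that round. -/

section

variable {V : Type*} [DecidableEq V] {round : V → ℕ} {strong : V → Finset V} {valid : V → Prop}

theorem strongPath_of_card_lt_card_add_card {u v : V} {layer U : Finset V}
    (hu : strong u ⊆ layer) (hU : U ⊆ layer) (hcard : #layer < #(strong u) + #U)
    (hUpath : ∀ x ∈ U, strongPath strong x v) : strongPath strong u v := by
  obtain ⟨x, hx⟩ := inter_nonempty_of_card_lt_card_add_card hu hU hcard
  obtain ⟨hxu, hxU⟩ := mem_inter.1 hx
  exact ReflTransGen.head hxu (hUpath x hxU)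

theorem exists_strongPath_round_eq
    (hedge : ∀ u x : V, x ∈ strong u → round x + 1 = round u)
    (hparent : ∀ u : V, valid u → 1 ≤ round u → ∃ x ∈ strong u, valid x)
    {u : V} (hu : valid u) {r : ℕ} (hr : r ≤ round u) :
    ∃ x, valid x ∧ round x = r ∧ strongPath strong u x := by
  generalize hk : round u = k at hr
  induction k, hr using Nat.le_induction generalizing u with
  | base => exact ⟨u, hu, hk, ReflTransGen.refl⟩
  | succ k _ ih =>
    obtain ⟨x, hxu, hx⟩ := hparent u hu (by omega)
    have hxk : round x = k := Nat.succ_injective ((hedge u x hxu).trans hk)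
    obtain ⟨y, hy, hyr, hxy⟩ := ih hx hxk
    exact ⟨y, hy, hyr, ReflTransGen.head hxu hxy⟩

theorem committed_leader_reached_by_later_leaders_general {q r : ℕ}
    (hedge : ∀ u x : V, x ∈ strong u → round x + 1 = round u)
    (hvalid : ∀ u : V, valid u → 1 ≤ round u → q ≤ #(strong u) ∧ ∀ x ∈ strong u, valid x)
    {layer U : Finset V} (hlayer : ∀ x, round x = r → x ∈ layer) (hU : U ⊆ layer)
    (hcard : #layer < q + #U) {v : V} (hUpath : ∀ x ∈ U, strongPath strong x v)
    {u : V} (hu : valid u) (hr : r < round u) : strongPath strong u v := by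
  have hq : 0 < q := by
    have := card_le_card hU
    omega
  have hparent (y : V) (hy : valid y) (hy₁ : 1 ≤ round y) : ∃ x ∈ strong y, valid x := by
    obtain ⟨hquorum, hstrong⟩ := hvalid y hy hy₁
    obtain ⟨x, hx⟩ := card_pos.1 (hq.trans_le hquorum)
    exact ⟨x, hx, hstrong x hx⟩
  obtain ⟨x, hx, hxr, hux⟩ := exists_strongPath_round_eq hedge hparent hu (Nat.succ_le_of_lt hr)
  have hlayer_x : strong x ⊆ layer := fun y hy =>
    hlayer y (Nat.succ_injective ((hedge x y hy).trans hxr))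
  have hquorum : q ≤ #(strong x) := (hvalid x hx (by omega)).1
  exact hux.trans (strongPath_of_card_lt_card_add_card hlayer_x hU (by omega) hUpath)

end

theorem roundOf_lt_roundOf {w w' i j : ℕ} (hw : 1 ≤ w) (hww' : w < w') (hij : i < j + 4) :
    roundOf w i < roundOf w' j := by
  simp only [roundOf]
  omega

theorem committed_leader_reached_by_later_leaders
    {V : Type*} [DecidableEq V] [Fintype V] (n : ℕ)
    (round : V → ℕ) (strong : V → Finset V) (valid : V → Prop)
    (hedge : ∀ u x : V, x ∈ strong u → round x + 1 = round u)
    -- at most n vertices per round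
    (hround : ∀ r : ℕ, (Finset.univ.filter fun x => round x = r).card ≤ n)
    -- every valid vertex of a round r+1 has at least ⌊n/2⌋+1 strong edges,
    -- all pointing to valid vertices
    (hvalid : ∀ u : V, valid u → 1 ≤ round u →
      (strong u).card ≥ n / 2 + 1 ∧ ∀ x ∈ strong u, valid x)
    (w : ℕ) (hw : 1 ≤ w) (v : V) (hv : round v = roundOf w 1) (hvvalid : valid v)
    -- direct commit rule: a quorum of valid round(w,4) vertices has strong paths to v
    (U : Finset V) (hUr : ∀ u ∈ U, round u = roundOf w 4 ∧ valid u)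
    (hUc : U.card ≥ n / 2 + 1) (hUpath : ∀ u ∈ U, strongPath strong u v) :
    -- every valid vertex of any round ≥ round(w+1,1) has a strong path to v;
    -- in particular any later wave's leader committed by another process does
    (∀ u : V, valid u → round u ≥ roundOf (w + 1) 1 → strongPath strong u v) ∧
    ∀ w' : ℕ, w < w' → ∀ u : V, valid u → round u = roundOf w' 1 →
      strongPath strong u v := by
  have reach (u : V) (hu : valid u) (hr : roundOf w 4 < round u) : strongPath strong u v :=
    committed_leader_reached_by_later_leaders_general hedge hvalid
      (layer := {x | round x = roundOf w 4}) (by simp) (fun x hx => by simp [hUr x hx])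
      (by have := hround (roundOf w 4); omega) hUpath hu hr
  exact ⟨fun u hu hr => reach u hu ((roundOf_lt_roundOf hw w.lt_succ_self (by simp)).trans_le hr),
    fun w' hw' u hu hr => reach u hu ((roundOf_lt_roundOf hw hw' (by simp)).trans_eq hr.symm)⟩
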